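/- The center of the $k$-algebra $M$ is exactly the set of scalar matrices $\{p\,I_{n+1} : p \in A_0\}$. In particular, by the presentation of the invariant ring, the center of $M$ is isomorphic as a $k$-algebra to $k[T_0,\dots,T_n,U,V]/(UV - T_0T_1\cdots T_n)$. -/

import Mathlib

open MvPolynomial

noncomputable section

/-- The variables of `A = k[x₀,…,xₙ,y₀,…,yₙ]`: `Sum.inl i` is `xᵢ`, `Sum.inr i` is `yᵢ`. -/
abbrev Vars (n : ℕ) : Type := Fin (n + 1) ⊕ Fin (n + 1)

/-- The `l`-th weight of a monomial `∏ xᵢ^{cᵢ} yᵢ^{dᵢ}`, for `l ∈ {1,…,n}` encoded as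
`l : Fin n` (representing the index `l+1`): it is `c_{l-1} - c_l - d_{l-1} + d_l`. -/
def wt (n : ℕ) (σ : Vars n →₀ ℕ) (l : Fin n) : ℤ :=
  (σ (Sum.inl l.castSucc) : ℤ) - (σ (Sum.inl l.succ) : ℤ)
    - (σ (Sum.inr l.castSucc) : ℤ) + (σ (Sum.inr l.succ) : ℤ)

/-- The weight space `A_χ`. -/
def wtSpace (k : Type) [Field k] (n : ℕ) (χ : Fin n → ℤ) : Set (MvPolynomial (Vars n) k) :=
  {p | ∀ σ ∈ p.support, ∀ l : Fin n, wt n σ l = χ l}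

/-- The vector `χ_l ∈ ℤⁿ` for `l ∈ {0,…,n}`: the `l`-th standard basis vector if
`1 ≤ l`, and `0` if `l = 0`. -/
def stdChi (n : ℕ) (l : Fin (n + 1)) : Fin n → ℤ :=
  fun m => if (m : ℕ) + 1 = (l : ℕ) then 1 else 0

/-- The matrix model `M`: the set of `(n+1)×(n+1)` matrices over `A` whose `(j,i)` entry
lies in `A_{χ_j - χ_i}`. -/
def Mset (k : Type) [Field k] (n : ℕ) :
    Set (Matrix (Fin (n + 1)) (Fin (n + 1)) (MvPolynomial (Vars n) k)) :=
  {m | ∀ i j : Fin (n + 1), m j i ∈ wtSpace k n (stdChi n j - stdChi n i)}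

/-- The center of `M`, as a subset of `Mat_{n+1}(A)`. -/
def centerSet (k : Type) [Field k] (n : ℕ) :
    Set (Matrix (Fin (n + 1)) (Fin (n + 1)) (MvPolynomial (Vars n) k)) :=
  {m | m ∈ Mset k n ∧ ∀ m' ∈ Mset k n, m * m' = m' * m}

/-- The polynomial ring `k[T₀,…,Tₙ,U,V]`: `Sum.inl i` is `Tᵢ`, `Sum.inr true` is `U`,
`Sum.inr false` is `V`. -/
abbrev TUV (k : Type) [Field k] (n : ℕ) : Type := MvPolynomial (Fin (n + 1) ⊕ Bool) k

/-- The element `UV - T₀T₁⋯Tₙ`. -/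
def relElt (k : Type) [Field k] (n : ℕ) : TUV k n :=
  X (Sum.inr true) * X (Sum.inr false) - ∏ i : Fin (n + 1), X (Sum.inl i)

lemma psi_aux_vars (k : Type) [Field k] (n : ℕ) (σ : Vars n →₀ ℕ) :
    (monomial σ (1 : k)) = (∏ i, X (Sum.inl i) ^ σ (Sum.inl i)) *
      ∏ i, X (Sum.inr i) ^ σ (Sum.inr i) := by
  rw [monomial_eq, Finsupp.prod_fintype _ _ (by simp), Fintype.prod_sum_type]
  simp

/-- images of the generators -/
def genImg (k : Type) [Field k] (n : ℕ) : Fin (n + 1) ⊕ Bool → MvPolynomial (Vars n) k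
  | Sum.inl i => X (Sum.inl i) * X (Sum.inr i)
  | Sum.inr true => ∏ i, X (Sum.inl i)
  | Sum.inr false => ∏ i, X (Sum.inr i)

/-- the map on the polynomial ring -/
def psi (k : Type) [Field k] (n : ℕ) : TUV k n →ₐ[k] MvPolynomial (Vars n) k :=
  aeval (genImg k n)

/-- exponent of the image of a monomial -/
def expo (n : ℕ) (τ : (Fin (n + 1) ⊕ Bool) →₀ ℕ) : Vars n →₀ ℕ :=
  Finsupp.equivFunOnFinite.symm
    (Sum.elim (fun i => τ (Sum.inl i) + τ (Sum.inr true))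
      (fun i => τ (Sum.inl i) + τ (Sum.inr false)))

/-- exponent in the other direction -/
def back (n : ℕ) (σ : Vars n →₀ ℕ) : (Fin (n + 1) ⊕ Bool) →₀ ℕ :=
  Finsupp.equivFunOnFinite.symm
    (Sum.elim (fun i => min (σ (Sum.inl i)) (σ (Sum.inr i)))
      (fun b => if b then σ (Sum.inl 0) - σ (Sum.inr 0) else σ (Sum.inr 0) - σ (Sum.inl 0)))

lemma tuv_monomial (k : Type) [Field k] (n : ℕ) (τ : (Fin (n + 1) ⊕ Bool) →₀ ℕ) :
    (monomial τ (1 : k)) = (∏ i, X (Sum.inl i) ^ τ (Sum.inl i)) *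
      (X (Sum.inr true) ^ τ (Sum.inr true) * X (Sum.inr false) ^ τ (Sum.inr false)) := by
  rw [monomial_eq, Finsupp.prod_fintype _ _ (by simp), Fintype.prod_sum_type]
  simp

lemma psi_monomial (k : Type) [Field k] (n : ℕ) (τ : (Fin (n + 1) ⊕ Bool) →₀ ℕ) :
    psi k n (monomial τ 1) = monomial (expo n τ) 1 := by
  rw [tuv_monomial, psi_aux_vars]
  simp only [psi, map_mul, map_prod, map_pow, aeval_X, genImg, expo,
    Finsupp.equivFunOnFinite_symm_apply_apply, Sum.elim_inl, Sum.elim_inr, pow_add, mul_pow,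
    Finset.prod_mul_distrib, Finset.prod_pow]
  ring

lemma wt_expo (n : ℕ) (τ : (Fin (n + 1) ⊕ Bool) →₀ ℕ) (l : Fin n) : wt n (expo n τ) l = 0 := by
  simp [wt, expo]
  ring

lemma expo_back (n : ℕ) (σ : Vars n →₀ ℕ) (h : ∀ l, wt n σ l = 0) : expo n (back n σ) = σ := by
  have key : ∀ i : Fin (n + 1), (σ (Sum.inl i) : ℤ) - σ (Sum.inr i)
      = σ (Sum.inl 0) - σ (Sum.inr 0) := by
    intro i
    induction i using Fin.induction with
    | zero => rfl
    | succ i ih =>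
      have := h i
      unfold wt at this
      omega
  ext v
  rcases v with i | i
  · have := key i
    simp [expo, back]
    omega
  · have := key i
    simp [expo, back]
    omega

lemma mk_rel (k : Type) [Field k] (n : ℕ) :
    (Ideal.Quotient.mk (Ideal.span {relElt k n})) (∏ i : Fin (n + 1), X (Sum.inl i)) =
    (Ideal.Quotient.mk (Ideal.span {relElt k n})) (X (Sum.inr true) * X (Sum.inr false)) := by
  symm
  rw [Ideal.Quotient.eq]
  exact Ideal.subset_span rfl

lemma mk_back_expo (k : Type) [Field k] (n : ℕ) (τ : (Fin (n + 1) ⊕ Bool) →₀ ℕ) :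
    (Ideal.Quotient.mk (Ideal.span {relElt k n})) (monomial (back n (expo n τ)) 1) =
    (Ideal.Quotient.mk (Ideal.span {relElt k n})) (monomial τ 1) := by
  rw [tuv_monomial, tuv_monomial]
  have h1 : ∀ i, back n (expo n τ) (Sum.inl i)
      = τ (Sum.inl i) + min (τ (Sum.inr true)) (τ (Sum.inr false)) := by
    intro i; simp [back, expo]
  have h2 : back n (expo n τ) (Sum.inr true) = τ (Sum.inr true) - τ (Sum.inr false) := by
    simp [back, expo]
    omega
  have h3 : back n (expo n τ) (Sum.inr false) = τ (Sum.inr false) - τ (Sum.inr true) := by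
    simp [back, expo]
    omega
  simp only [h1, h2, h3, pow_add, Finset.prod_mul_distrib, Finset.prod_pow]
  simp only [map_mul, map_pow, mk_rel]
  rw [mul_assoc]
  congr 1
  generalize (Ideal.Quotient.mk (Ideal.span {relElt k n})) (X (Sum.inr true)) = u
  generalize (Ideal.Quotient.mk (Ideal.span {relElt k n})) (X (Sum.inr false)) = v
  generalize τ (Sum.inr true) = p
  generalize τ (Sum.inr false) = q
  rw [mul_pow, mul_mul_mul_comm, ← pow_add, ← pow_add]
  congr 2 <;> omega

lemma psi_rel (k : Type) [Field k] (n : ℕ) :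
    ∀ a ∈ Ideal.span {relElt k n}, (psi k n : TUV k n →+* MvPolynomial (Vars n) k) a = 0 := by
  intro a ha
  have : Ideal.span {relElt k n} ≤
      RingHom.ker (psi k n : TUV k n →+* MvPolynomial (Vars n) k) := by
    rw [Ideal.span_le, Set.singleton_subset_iff]
    simp [relElt, psi, genImg, Finset.prod_mul_distrib]
  exact this ha

/-- induced map on the quotient -/
def psiBar (k : Type) [Field k] (n : ℕ) :
    (TUV k n ⧸ Ideal.span {relElt k n}) →+* MvPolynomial (Vars n) k :=
  Ideal.Quotient.lift _ (psi k n : TUV k n →+* MvPolynomial (Vars n) k) (psi_rel k n)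

/-- linear section -/
def sect (k : Type) [Field k] (n : ℕ) :
    MvPolynomial (Vars n) k →ₗ[k] (TUV k n ⧸ Ideal.span {relElt k n}) :=
  (basisMonomials (Vars n) k).constr k
    (fun σ => Ideal.Quotient.mk (Ideal.span {relElt k n}) (monomial (back n σ) 1))

lemma sect_psi (k : Type) [Field k] (n : ℕ) (p : TUV k n) :
    sect k n (psi k n p) = Ideal.Quotient.mk (Ideal.span {relElt k n}) p := by
  have : (sect k n) ∘ₗ (psi k n).toLinearMap =
      (Ideal.Quotient.mkₐ k (Ideal.span {relElt k n})).toLinearMap := by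
    apply (basisMonomials (Fin (n + 1) ⊕ Bool) k).ext
    intro τ
    have h : sect k n (monomial (expo n τ) 1) =
        Ideal.Quotient.mk (Ideal.span {relElt k n}) (monomial (back n (expo n τ)) 1) := by
      have := (basisMonomials (Vars n) k).constr_basis k (fun σ =>
        Ideal.Quotient.mk (Ideal.span {relElt k n}) (monomial (back n σ) 1)) (expo n τ)
      rwa [coe_basisMonomials] at this
    simp only [coe_basisMonomials, LinearMap.comp_apply, AlgHom.toLinearMap_apply, psi_monomial, h,
      mk_back_expo]
    rfl
  exact LinearMap.congr_fun this p

lemma psiBar_inj (k : Type) [Field k] (n : ℕ) : Function.Injective (psiBar k n) := by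
  apply Function.LeftInverse.injective (g := sect k n)
  intro q
  obtain ⟨p, rfl⟩ := Ideal.Quotient.mk_surjective q
  exact sect_psi k n p

lemma wtSpace_zero_mem (k : Type) [Field k] (n : ℕ) (χ : Fin n → ℤ) :
    (0 : MvPolynomial (Vars n) k) ∈ wtSpace k n χ := by
  simp [wtSpace]

lemma wtSpace_monomial (k : Type) [Field k] (n : ℕ) (χ : Fin n → ℤ) (σ : Vars n →₀ ℕ)
    (h : ∀ l, wt n σ l = χ l) (a : k) : monomial σ a ∈ wtSpace k n χ := by
  intro s hs
  have := support_monomial_subset hs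
  rw [Finset.mem_singleton] at this
  subst this
  exact h

lemma wtSpace_add (k : Type) [Field k] (n : ℕ) (χ : Fin n → ℤ) (p q : MvPolynomial (Vars n) k)
    (hp : p ∈ wtSpace k n χ) (hq : q ∈ wtSpace k n χ) : p + q ∈ wtSpace k n χ := by
  intro s hs
  rcases Finset.mem_union.1 (support_add hs) with h | h
  · exact hp s h
  · exact hq s h

lemma psi_range (k : Type) [Field k] (n : ℕ) : Set.range (psi k n) = wtSpace k n 0 := by
  apply Set.Subset.antisymm
  · rintro _ ⟨p, rfl⟩
    induction p using MvPolynomial.induction_on' with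
    | monomial τ a =>
      have : (monomial τ a : TUV k n) = a • monomial τ 1 := by simp [smul_monomial]
      rw [this, map_smul, psi_monomial, smul_monomial]
      exact wtSpace_monomial k n 0 _ (wt_expo n τ) _
    | add p q hp hq =>
      rw [map_add]
      exact wtSpace_add k n 0 _ _ hp hq
  · intro p hp
    refine ⟨∑ σ ∈ p.support, coeff σ p • monomial (back n σ) 1, ?_⟩
    rw [map_sum]
    conv_rhs => rw [p.as_sum]
    apply Finset.sum_congr rfl
    intro σ hσ
    rw [map_smul, psi_monomial, smul_monomial, expo_back n σ (hp σ hσ)]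
    simp

/-- exponent of a monomial of weight `χ_j` -/
def chiExp (n : ℕ) (j : Fin (n + 1)) : Vars n →₀ ℕ :=
  Finsupp.equivFunOnFinite.symm (Sum.elim (fun i => if i < j then 1 else 0) (fun _ => 0))

lemma wt_chiExp (n : ℕ) (j : Fin (n + 1)) (l : Fin n) : wt n (chiExp n j) l = stdChi n j l := by
  simp only [wt, chiExp, stdChi, Finsupp.equivFunOnFinite_symm_apply_apply, Sum.elim_inl,
    Sum.elim_inr, Fin.lt_def, Fin.val_castSucc, Fin.val_succ]
  split_ifs <;> omega

lemma single_mem (k : Type) [Field k] (n : ℕ) (i j : Fin (n + 1)) (p : MvPolynomial (Vars n) k)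
    (hp : p ∈ wtSpace k n (stdChi n j - stdChi n i)) : Matrix.single j i p ∈ Mset k n := by
  intro a b
  rw [Matrix.single_apply]
  split_ifs with h
  · obtain ⟨rfl, rfl⟩ := h
    exact hp
  · exact wtSpace_zero_mem k n _

lemma center_eq (k : Type) [Field k] (n : ℕ) :
    centerSet k n =
      {m : Matrix (Fin (n + 1)) (Fin (n + 1)) (MvPolynomial (Vars n) k) |
        ∃ p ∈ wtSpace k n 0, m = p • 1} := by
  ext m
  constructor
  · rintro ⟨hm, hc⟩
    refine ⟨m 0 0, by simpa using hm 0 0, ?_⟩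
    ext1 j i
    by_cases hij : j = i
    · subst hij
      have h := hc (Matrix.single j 0 (monomial (chiExp n j) 1)) (single_mem k n 0 j _ (by
        apply wtSpace_monomial
        intro l
        rw [wt_chiExp]
        simp [stdChi]))
      have h' := congrFun (congrFun h j) 0
      rw [Matrix.mul_single_apply_same, Matrix.single_mul_apply_same, mul_comm] at h'
      have h2 := mul_left_cancel₀ (by simp) h'
      simp [h2]
    · have h := hc (Matrix.single i i 1) (single_mem k n i i _ (by
        apply wtSpace_monomial
        intro l
        simp [wt]))
      have h' := congrFun (congrFun h j) i
      rw [Matrix.mul_single_apply_same, Matrix.single_mul_apply_of_ne _ _ _ _ _ hij] at h'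
      simpa [Matrix.one_apply, hij] using h'
  · rintro ⟨p, hp, rfl⟩
    refine ⟨?_, ?_⟩
    · intro i j
      by_cases hij : j = i
      · subst hij
        simpa using hp
      · simpa [Matrix.one_apply, hij] using wtSpace_zero_mem k n _
    · intro m' _
      simp

/-- The center of `M` is exactly the set of scalar matrices `p·I` with `p ∈ A₀`;
in particular it is isomorphic as a `k`-algebra to `k[T₀,…,Tₙ,U,V]/(UV - T₀⋯Tₙ)`
(there is an injective ring homomorphism from this quotient onto the center). -/
theorem stmt9 (k : Type) [Field k] (n : ℕ) (hn : 1 ≤ n) :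
    centerSet k n =
      {m : Matrix (Fin (n + 1)) (Fin (n + 1)) (MvPolynomial (Vars n) k) |
        ∃ p ∈ wtSpace k n 0, m = p • 1} ∧
    ∃ φ : (TUV k n ⧸ Ideal.span {relElt k n}) →+*
        Matrix (Fin (n + 1)) (Fin (n + 1)) (MvPolynomial (Vars n) k),
      Function.Injective φ ∧ Set.range φ = centerSet k n := by
  refine ⟨center_eq k n, (algebraMap (MvPolynomial (Vars n) k)
    (Matrix (Fin (n + 1)) (Fin (n + 1)) (MvPolynomial (Vars n) k))).comp (psiBar k n), ?_, ?_⟩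
  · rw [RingHom.coe_comp]
    refine Function.Injective.comp ?_ (psiBar_inj k n)
    intro a b hab
    have := congrFun (congrFun hab 0) 0
    simpa [Matrix.algebraMap_matrix_apply] using this
  · rw [center_eq, ← psi_range]
    ext m
    constructor
    · rintro ⟨q, rfl⟩
      obtain ⟨p, rfl⟩ := Ideal.Quotient.mk_surjective q
      exact ⟨psi k n p, ⟨p, rfl⟩, Algebra.algebraMap_eq_smul_one (psi k n p)⟩
    · rintro ⟨_, ⟨p, rfl⟩, rfl⟩
      exact ⟨Ideal.Quotient.mk _ p, Algebra.algebraMap_eq_smul_one (psi k n p)⟩
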